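/- Let d ≥ 1, let p_1 ≥ … ≥ p_d ≥ 0 be real numbers, let n ≥ 1, let A_1, …, A_n be d×d complex Hermitian matrices, and let C = A_1 + … + A_n. Denote by a^{(l)}_1 ≥ … ≥ a^{(l)}_d the eigenvalues of A_l and c_1 ≥ … ≥ c_d the eigenvalues of C, each in decreasing order. Then ∑_{i=1}^d p_{i,d−i+1} (c_i − c_{d−i+1})² ≤ ∑_{i=1}^d p_{i,d−i+1} (∑_{l=1}^n (a^{(l)}_i − a^{(l)}_{d−i+1}))². (Finite-sum form of the upper bound K_α of Theorem 2, obtained by repeated application of the two-matrix lemma.) -/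

import Mathlib

/-- The coefficients `p_{i,j}`: `0` if `p i = p j = 0`, else `(p i - p j)² / (p i + p j)`. -/
noncomputable def pij {d : ℕ} (p : Fin d → ℝ) (i j : Fin d) : ℝ :=
  if p i = 0 ∧ p j = 0 then 0 else (p i - p j) ^ 2 / (p i + p j)

theorem aux_pij_eq {d : ℕ} (p : Fin d → ℝ) (i j : Fin d) :
    pij p i j = (p i - p j) ^ 2 / (p i + p j) := by
  unfold pij
  split_ifs with h
  · simp [h.1, h.2]
  · rfl

theorem aux_g {P P' Q Q' : ℝ} (h1 : P' ≤ P) (h2 : Q' ≤ P') (h3 : Q ≤ Q') (h4 : 0 ≤ Q) :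
    (P' - Q') ^ 2 / (P' + Q') ≤ (P - Q) ^ 2 / (P + Q) := by
  rcases (by linarith : 0 ≤ P' + Q').eq_or_lt with h | h
  · rw [← h, div_zero]
    exact div_nonneg (sq_nonneg _) (by linarith)
  · have hP : 0 < P + Q := by linarith
    rw [div_le_div_iff₀ h hP]
    have e1 : (P' - Q') * (P + Q) ≤ (P - Q) * (P' + Q') := by
      nlinarith [mul_le_mul h1 h3 h4 (by linarith)]
    have e2 : P' - Q' ≤ P - Q := by linarith
    have := mul_le_mul e2 e1 (mul_nonneg (by linarith) hP.le) (by linarith)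
    nlinarith

theorem aux_pij_nonneg {d : ℕ} (p : Fin d → ℝ) (hp0 : ∀ i, 0 ≤ p i) (i j : Fin d) :
    0 ≤ pij p i j := by
  rw [aux_pij_eq]
  exact div_nonneg (sq_nonneg _) (add_nonneg (hp0 i) (hp0 j))

theorem aux_pij_symm {d : ℕ} (p : Fin d → ℝ) (i j : Fin d) : pij p i j = pij p j i := by
  rw [aux_pij_eq, aux_pij_eq, add_comm (p i)]
  congr 1
  ring

theorem aux_base {d : ℕ} (p : Fin d → ℝ) (hp : Antitone p) (hp0 : ∀ i, 0 ≤ p i)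
    (c : Fin d → ℝ) (hc : Antitone c) (i j : Fin d) (hij : i ≤ j) (hj : j ≤ j.rev) :
    pij p j j.rev * (c j - c j.rev) ≤ pij p i i.rev * (c i - c i.rev) := by
  have hr : j.rev ≤ i.rev := Fin.rev_le_rev.2 hij
  have hq : pij p j j.rev ≤ pij p i i.rev := by
    rw [aux_pij_eq, aux_pij_eq]
    exact aux_g (hp hij) (hp hj) (hp hr) (hp0 _)
  have h1 := hc hij
  have h2 := hc hj
  have h3 := hc hr
  exact mul_le_mul hq (by linarith) (by linarith) (aux_pij_nonneg p hp0 _ _)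

theorem aux_anti {d : ℕ} (p : Fin d → ℝ) (hp : Antitone p) (hp0 : ∀ i, 0 ≤ p i)
    (c : Fin d → ℝ) (hc : Antitone c) :
    Antitone (fun i : Fin d => pij p i i.rev * (c i - c i.rev)) := by
  intro i j hij
  change pij p j j.rev * (c j - c j.rev) ≤ pij p i i.rev * (c i - c i.rev)
  rcases le_total j j.rev with hj | hj
  · exact aux_base p hp hp0 c hc i j hij hj
  · rcases le_total i i.rev with hi | hi
    · have h1 := mul_nonneg (aux_pij_nonneg p hp0 i i.rev) (sub_nonneg.2 (hc hi))
      have h2 := mul_nonneg (aux_pij_nonneg p hp0 j j.rev) (sub_nonneg.2 (hc hj))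
      nlinarith
    · have := aux_base p hp hp0 c hc j.rev i.rev (Fin.rev_le_rev.2 hij) (by simpa using hi)
      rw [Fin.rev_rev, Fin.rev_rev, aux_pij_symm p i.rev, aux_pij_symm p j.rev] at this
      nlinarith

theorem aux_ds {d : ℕ} (M : Matrix (Fin d) (Fin d) ℝ) (hM : M ∈ doublyStochastic ℝ (Fin d))
    (s a : Fin d → ℝ) (hs : Antitone s) (ha : Antitone a) :
    ∑ i, ∑ k, s i * a k * M i k ≤ ∑ i, s i * a i := by
  obtain ⟨w, hw0, hw1, hwM⟩ := exists_eq_sum_perm_of_mem_doublyStochastic hM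
  have hmono : Monovary s a := hs.monovary ha
  have key : ∀ σ : Equiv.Perm (Fin d),
      ∑ i, ∑ k, s i * a k * (σ.permMatrix ℝ) i k ≤ ∑ i, s i * a i := by
    intro σ
    have : ∑ i, ∑ k, s i * a k * (σ.permMatrix ℝ) i k = ∑ i, s i * a (σ i) := by
      refine Finset.sum_congr rfl fun i _ => ?_
      simp [Equiv.Perm.permMatrix, PEquiv.toMatrix_apply]
    rw [this]
    exact hmono.sum_mul_comp_perm_le_sum_mul
  calc ∑ i, ∑ k, s i * a k * M i k
      = ∑ σ : Equiv.Perm (Fin d), w σ * ∑ i, ∑ k, s i * a k * (σ.permMatrix ℝ) i k := by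
        rw [← hwM]
        simp only [Matrix.sum_apply, Matrix.smul_apply, smul_eq_mul, Finset.mul_sum]
        have : ∀ i : Fin d, ∑ k, ∑ σ : Equiv.Perm (Fin d),
            s i * a k * (w σ * (σ.permMatrix ℝ) i k)
            = ∑ σ : Equiv.Perm (Fin d), ∑ k, w σ * (s i * a k * (σ.permMatrix ℝ) i k) := by
          intro i
          rw [Finset.sum_comm]
          exact Finset.sum_congr rfl fun σ _ => Finset.sum_congr rfl fun k _ => by ring
        rw [Finset.sum_congr rfl fun i _ => this i, Finset.sum_comm]
    _ ≤ ∑ σ : Equiv.Perm (Fin d), w σ * ∑ i, s i * a i :=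
        Finset.sum_le_sum fun σ _ => mul_le_mul_of_nonneg_left (key σ) (hw0 σ)
    _ = ∑ i, s i * a i := by rw [← Finset.sum_mul, hw1, one_mul]

theorem aux_mk {d : ℕ} (w : Fin d → EuclideanSpace ℂ (Fin d)) (hw : Orthonormal ℂ w) :
    ∃ b : OrthonormalBasis (Fin d) ℂ (EuclideanSpace ℂ (Fin d)), ∀ i, b i = w i := by
  have hs : ⊤ ≤ Submodule.span ℂ (Set.range w) := by
    rw [hw.linearIndependent.span_eq_top_of_card_eq_finrank' (by simp)]
  exact ⟨OrthonormalBasis.mk hw hs, fun i => by simp⟩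

theorem aux_quad {d : ℕ} (A : Matrix (Fin d) (Fin d) ℂ) (a : Fin d → ℝ)
    (b : OrthonormalBasis (Fin d) ℂ (EuclideanSpace ℂ (Fin d)))
    (h : ∀ k, Matrix.toEuclideanLin A (b k) = (a k : ℂ) • b k) (x : EuclideanSpace ℂ (Fin d)) :
    (inner ℂ x (Matrix.toEuclideanLin A x)).re = ∑ k, a k * ‖inner ℂ (b k) x‖ ^ 2 := by
  have : inner ℂ x (Matrix.toEuclideanLin A x)
      = ∑ k, ((a k * ‖inner ℂ (b k) x‖ ^ 2 : ℝ) : ℂ) := by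
    conv_lhs =>
      enter [3]
      rw [← b.sum_repr' x, map_sum]
    rw [inner_sum]
    refine Finset.sum_congr rfl fun k _ => ?_
    rw [map_smul, h, inner_smul_right, inner_smul_right, ← inner_conj_symm x (b k)]
    have := Complex.mul_conj' (inner ℂ (b k) x)
    push_cast
    rw [← this]
    ring
  rw [this, ← Complex.ofReal_sum, Complex.ofReal_re]

theorem aux_mem {d : ℕ} (b e : OrthonormalBasis (Fin d) ℂ (EuclideanSpace ℂ (Fin d))) :
    (Matrix.of fun i k => ‖inner ℂ (b k) (e i)‖ ^ 2)
      ∈ doublyStochastic ℝ (Fin d) := by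
  rw [mem_doublyStochastic_iff_sum]
  refine ⟨fun i k => sq_nonneg _, fun i => ?_, fun k => ?_⟩
  · simp only [Matrix.of_apply]
    rw [b.sum_sq_norm_inner_right (e i), e.norm_eq_one, one_pow]
  · simp only [Matrix.of_apply]
    rw [e.sum_sq_norm_inner_left (b k), b.norm_eq_one, one_pow]

/-- Finite-sum form of the upper bound `K_α` of Theorem 2: for `p_1 ≥ … ≥ p_d ≥ 0`,
Hermitian matrices `A_1, …, A_n` with decreasingly ordered eigenvalues `a l`
(each witnessed by an orthonormal eigenbasis), and `C = ∑ l, A l` with decreasingly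
ordered eigenvalues `c`,
`∑ᵢ p_{i,d−i+1} (cᵢ − c_{d−i+1})² ≤ ∑ᵢ p_{i,d−i+1} (∑ₗ (aₗᵢ − aₗ_{d−i+1}))²`. -/
theorem pij_weighted_sum_inequality_multi {d : ℕ} (hd : 1 ≤ d)
    (p : Fin d → ℝ) (hp : Antitone p) (hp0 : ∀ i, 0 ≤ p i)
    (n : ℕ) (hn : 1 ≤ n)
    (A : Fin n → Matrix (Fin d) (Fin d) ℂ) (hA : ∀ l, (A l).IsHermitian)
    (a : Fin n → Fin d → ℝ) (ha : ∀ l, Antitone (a l))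
    (c : Fin d → ℝ) (hc : Antitone c)
    (u : Fin n → Fin d → EuclideanSpace ℂ (Fin d))
    (hu : ∀ l, Orthonormal ℂ (u l))
    (w : Fin d → EuclideanSpace ℂ (Fin d)) (hw : Orthonormal ℂ w)
    (hAu : ∀ l k, Matrix.toEuclideanLin (A l) (u l k) = (a l k : ℂ) • u l k)
    (hCw : ∀ k, Matrix.toEuclideanLin (∑ l, A l) (w k) = (c k : ℂ) • w k) :
    ∑ i, pij p i i.rev * (c i - c i.rev) ^ 2
      ≤ ∑ i, pij p i i.rev * (∑ l, (a l i - a l i.rev)) ^ 2 := by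
  choose b hb using fun l => aux_mk (u l) (hu l)
  obtain ⟨e, he⟩ := aux_mk w hw
  set s : Fin d → ℝ := fun i => pij p i i.rev * (c i - c i.rev) with hs_def
  have hs : Antitone s := aux_anti p hp hp0 c hc
  have hsrev : ∀ i, s i.rev = - s i := by
    intro i
    simp only [hs_def, Fin.rev_rev]
    rw [aux_pij_symm p i.rev]
    ring
  have hfold : ∀ f : Fin d → ℝ, ∑ i, s i * (f i - f i.rev) = 2 * ∑ i, s i * f i := by
    intro f
    have h1 : ∑ i, s i * f i.rev = - ∑ i, s i * f i := by
      rw [← Equiv.sum_comp Fin.revPerm, ← Finset.sum_neg_distrib]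
      refine Finset.sum_congr rfl fun i _ => ?_
      simp [hsrev]
    simp only [mul_sub, Finset.sum_sub_distrib]
    rw [h1]; ring
  have hck : ∀ i, c i = ∑ l, ∑ k, a l k * ‖inner ℂ (b l k) (e i)‖ ^ 2 := by
    intro i
    have h1 : (inner ℂ (e i) (Matrix.toEuclideanLin (∑ l, A l) (e i))).re = c i := by
      rw [he, hCw, inner_smul_right, inner_self_eq_norm_sq_to_K, hw.1 i]
      simp
    rw [← h1, map_sum, LinearMap.sum_apply, inner_sum, Complex.re_sum]
    refine Finset.sum_congr rfl fun l _ => ?_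
    exact aux_quad (A l) (a l) (b l) (fun k => by rw [hb]; exact hAu l k) (e i)
  have hkf : ∑ i, s i * c i ≤ ∑ i, s i * ∑ l, a l i := by
    have h1 : ∑ i, s i * c i
        = ∑ l, ∑ i, ∑ k, s i * a l k * ‖inner ℂ (b l k) (e i)‖ ^ 2 := by
      rw [Finset.sum_comm]
      refine Finset.sum_congr rfl fun i _ => ?_
      rw [hck i, Finset.mul_sum]
      refine Finset.sum_congr rfl fun l _ => ?_
      rw [Finset.mul_sum]
      exact Finset.sum_congr rfl fun k _ => by ring
    have h2 : ∑ i, s i * ∑ l, a l i = ∑ l, ∑ i, s i * a l i := by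
      rw [Finset.sum_comm]
      exact Finset.sum_congr rfl fun i _ => by rw [Finset.mul_sum]
    rw [h1, h2]
    refine Finset.sum_le_sum fun l _ => ?_
    have h3 := aux_ds _ (aux_mem (b l) e) s (a l) hs (ha l)
    simp only [Matrix.of_apply] at h3
    exact h3
  have hmain : ∑ i, pij p i i.rev * (c i - c i.rev) ^ 2
      ≤ ∑ i, pij p i i.rev * ((c i - c i.rev) * ∑ l, (a l i - a l i.rev)) := by
    have e1 := hfold c
    have e2 := hfold (fun i => ∑ l, a l i)
    have e3 : ∑ i, pij p i i.rev * (c i - c i.rev) ^ 2 = ∑ i, s i * (c i - c i.rev) :=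
      Finset.sum_congr rfl fun i _ => by simp only [hs_def]; ring
    have e4 : ∑ i, pij p i i.rev * ((c i - c i.rev) * ∑ l, (a l i - a l i.rev))
        = ∑ i, s i * (∑ l, a l i - ∑ l, a l i.rev) :=
      Finset.sum_congr rfl fun i _ => by
        simp only [hs_def, Finset.sum_sub_distrib]; ring
    rw [e3, e4, e1, e2]
    linarith
  have hamgm : 2 * ∑ i, pij p i i.rev * ((c i - c i.rev) * ∑ l, (a l i - a l i.rev))
      ≤ ∑ i, pij p i i.rev * (c i - c i.rev) ^ 2
        + ∑ i, pij p i i.rev * (∑ l, (a l i - a l i.rev)) ^ 2 := by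
    rw [Finset.mul_sum, ← Finset.sum_add_distrib]
    refine Finset.sum_le_sum fun i _ => ?_
    have := mul_nonneg (aux_pij_nonneg p hp0 i i.rev)
      (sq_nonneg ((c i - c i.rev) - ∑ l, (a l i - a l i.rev)))
    nlinarith
  linarith
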